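/- Let s be a natural number with s ≢ 2 (mod 3) such that 96s + 91 is prime, and let δ = (24s + 23)(48s + 45). Then there are no perfect numbers x and y with x - y = δ. -/

import Mathlib

/-!
With `a = 24 * s + 23` we have `δ = a * (2 * a - 1)`, the same shape as an even perfect number
other than `6`, which is `c * (2 * c - 1)` with `c ≡ 4 [MOD 12]`. As `δ` is odd, exactly one of
`x`, `y` is even.

If `x = c * (2 * c - 1)` is even, then `y = A * (2 * A + p)` with `A = c - a` and `p = 4 * a - 1`
prime. If `p ∤ A`, the two factors are coprime and `≡ 5 [MOD 6]`, so both divisor sums are even and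
`4 ∣ σ(y) = 2 * y`. If `p ∣ A`, then `y` has a unitary divisor `≡ 3 [MOD 4]`, whose divisor sum is a
multiple of `4`. Both are impossible for odd `y`.

If `y` is even, then `x ≡ 3 [MOD 4]`, or `y = 6` and `3` divides `x` exactly once; again `x` has a
unitary divisor `≡ 3 [MOD 4]`.
-/

theorem dvd_sum_divisors_of_dvd_add {n N : ℕ} (hn : ¬ IsSquare n)
    (h : ∀ d e, d * e = n → N ∣ d + e) : N ∣ ∑ d ∈ n.divisors, d := by
  have hn0 : n ≠ 0 := fun h0 ↦ hn (h0 ▸ IsSquare.zero)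
  rw [← ZMod.natCast_eq_zero_iff, Nat.cast_sum]
  refine Finset.sum_involution (fun d _ ↦ n / d) ?_ ?_ ?_ ?_ <;> intro d hd <;>
    have hmul := Nat.mul_div_cancel' (Nat.dvd_of_mem_divisors hd)
  · rw [← Nat.cast_add, ZMod.natCast_eq_zero_iff]
    exact h _ _ hmul
  · exact fun _ heq ↦ hn ⟨d, by rw [← hmul, heq]⟩
  · exact Nat.mem_divisors.2 ⟨Dvd.intro_left d hmul, hn0⟩
  · exact Nat.div_div_self (Nat.dvd_of_mem_divisors hd) hn0

-- `24` enters as the largest modulus in which every unit is its own inverse.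
theorem dvd_add_of_dvd_mul_add_one {N d e : ℕ} (hN : N ∣ 24) (h : N ∣ d * e + 1) : N ∣ d + e := by
  have hN' : N ∈ Nat.divisors 24 := Nat.mem_divisors.2 ⟨hN, by norm_num⟩
  rw [← ZMod.natCast_eq_zero_iff] at h ⊢
  push_cast at h ⊢
  generalize (d : ZMod N) = u, (e : ZMod N) = v at h ⊢
  rw [show Nat.divisors 24 = {1, 2, 3, 4, 6, 8, 12, 24} by decide] at hN'
  simp only [Finset.mem_insert, Finset.mem_singleton] at hN'
  rcases hN' with rfl | rfl | rfl | rfl | rfl | rfl | rfl | rfl <;> revert u v <;> decide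

theorem dvd_sum_divisors_of_dvd_add_one {n N : ℕ} (hN : N ∣ 24) (hn : ¬ IsSquare n)
    (h : N ∣ n + 1) : N ∣ ∑ d ∈ n.divisors, d :=
  dvd_sum_divisors_of_dvd_add hn fun _ _ hde ↦ dvd_add_of_dvd_mul_add_one hN (hde ▸ h)

theorem not_isSquare_of_mod_three_eq_two {n : ℕ} (h : n % 3 = 2) : ¬ IsSquare n := by
  rintro ⟨r, rfl⟩
  have := r.mod_lt (show 0 < 3 by norm_num)
  rw [Nat.mul_mod] at h
  interval_cases r % 3 <;> omega

theorem not_isSquare_of_mod_four_eq_three {n : ℕ} (h : n % 4 = 3) : ¬ IsSquare n := by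
  rintro ⟨r, rfl⟩
  have := r.mod_lt (show 0 < 4 by norm_num)
  rw [Nat.mul_mod] at h
  interval_cases r % 4 <;> omega

theorem two_dvd_sum_divisors_of_mod_six_eq_five {n : ℕ} (h : n % 6 = 5) :
    2 ∣ ∑ d ∈ n.divisors, d :=
  dvd_sum_divisors_of_dvd_add_one (by norm_num) (not_isSquare_of_mod_three_eq_two (by omega))
    (by omega)

theorem four_dvd_sum_divisors_of_mod_four_eq_three {n : ℕ} (h : n % 4 = 3) :
    4 ∣ ∑ d ∈ n.divisors, d :=
  dvd_sum_divisors_of_dvd_add_one (by norm_num) (not_isSquare_of_mod_four_eq_three h) (by omega)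

theorem not_four_dvd_sum_divisors_of_odd_perfect {n : ℕ} (hn : n.Perfect) (hodd : Odd n) :
    ¬ 4 ∣ ∑ d ∈ n.divisors, d := by
  rw [(Nat.perfect_iff_sum_divisors_eq_two_mul hn.2).1 hn]
  have := Nat.odd_iff.1 hodd
  omega

theorem not_perfect_mul_of_coprime_of_mod_four_eq_three {m n : ℕ} (hmn : m.Coprime n)
    (hm : m % 4 = 3) (hn : Odd n) : ¬ (m * n).Perfect := by
  intro hperf
  have hmodd : Odd m := Nat.odd_iff.2 (by omega)
  apply not_four_dvd_sum_divisors_of_odd_perfect hperf (hmodd.mul hn)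
  rw [hmn.sum_divisors_mul]
  exact (four_dvd_sum_divisors_of_mod_four_eq_three hm).mul_right _

theorem mod_four_ne_three_of_perfect {n : ℕ} (hn : n.Perfect) : n % 4 ≠ 3 := fun h ↦
  not_perfect_mul_of_coprime_of_mod_four_eq_three (Nat.coprime_one_right n) h odd_one
    (by rwa [mul_one])

theorem sq_dvd_of_odd_perfect {n q : ℕ} (hn : n.Perfect) (hodd : Odd n) (hq : q.Prime)
    (hq4 : q % 4 = 3) (hqn : q ∣ n) : q ^ 2 ∣ n := by
  obtain ⟨m, rfl⟩ := hqn
  suffices hqm : q ∣ m by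
    rw [sq]
    exact mul_dvd_mul_left q hqm
  by_contra hqm
  exact not_perfect_mul_of_coprime_of_mod_four_eq_three ((hq.coprime_iff_not_dvd).2 hqm) hq4
    (Nat.odd_mul.1 hodd).2 hn

theorem not_perfect_mul_of_coprime_of_mod_six_eq_five {m n : ℕ} (hmn : m.Coprime n)
    (hm : m % 6 = 5) (hn : n % 6 = 5) : ¬ (m * n).Perfect := by
  intro hperf
  have hmodd : Odd m := Nat.odd_iff.2 (by omega)
  have hnodd : Odd n := Nat.odd_iff.2 (by omega)
  apply not_four_dvd_sum_divisors_of_odd_perfect hperf (hmodd.mul hnodd)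
  rw [hmn.sum_divisors_mul]
  exact mul_dvd_mul (two_dvd_sum_divisors_of_mod_six_eq_five hm)
    (two_dvd_sum_divisors_of_mod_six_eq_five hn)

-- Both `m` and `2 * m + 1` are `≡ 3 [MOD 4]`, and `p` divides at most one of them.
theorem not_perfect_prime_pow_mul_mul_two_mul_add_one {p m : ℕ} (k : ℕ) (hp : p.Prime)
    (hpodd : Odd p) (hm : m % 4 = 3) : ¬ (p ^ k * (m * (2 * m + 1))).Perfect := by
  have hmodd : Odd m := Nat.odd_iff.2 (by omega)
  have hcop : m.Coprime (2 * m + 1) := by simp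
  by_cases hpm : p ∣ m
  · have hp' : (2 * m + 1).Coprime p := (hcop.coprime_dvd_left hpm).symm
    rw [show p ^ k * (m * (2 * m + 1)) = (2 * m + 1) * (p ^ k * m) by ring]
    exact not_perfect_mul_of_coprime_of_mod_four_eq_three
      ((hp'.pow_right k).mul_right hcop.symm) (by omega) (hpodd.pow.mul hmodd)
  · have hp' : m.Coprime p := ((hp.coprime_iff_not_dvd).2 hpm).symm
    rw [mul_left_comm]
    exact not_perfect_mul_of_coprime_of_mod_four_eq_three
      ((hp'.pow_right k).mul_right hcop) hm (hpodd.pow.mul ⟨m, rfl⟩)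

theorem not_perfect_mul_two_mul_add_prime {A p : ℕ} (hp : p.Prime) (hp12 : p % 12 = 7)
    (hA : A % 12 = 5) : ¬ (A * (2 * A + p)).Perfect := by
  by_cases hpA : p ∣ A
  · obtain ⟨m, rfl⟩ := hpA
    have hm : m % 4 = 3 := by
      have hpm : (p * m) % 4 = 1 := by omega
      rw [Nat.mul_mod, show p % 4 = 3 by omega] at hpm
      omega
    rw [show p * m * (2 * (p * m) + p) = p ^ 2 * (m * (2 * m + 1)) by ring]
    exact not_perfect_prime_pow_mul_mul_two_mul_add_one 2 hp (Nat.odd_iff.2 (by omega)) hm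
  · have hcop : A.Coprime (2 * A + p) := by
      simpa using ((hp.coprime_iff_not_dvd).2 hpA).symm
    exact not_perfect_mul_of_coprime_of_mod_six_eq_five hcop (by omega) (by omega)

theorem prime_and_eq_of_mul_sum_divisors_eq {M m : ℕ} (hM : 1 < M) (hm : 0 < m)
    (h : M * ∑ d ∈ m.divisors, d = (M + 1) * m) : m.Prime ∧ m = M := by
  obtain ⟨t, rfl⟩ : M ∣ m := (show M.Coprime (M + 1) by simp).dvd_of_dvd_mul_left ⟨_, h.symm⟩
  have hσ : ∑ d ∈ (M * t).divisors, d = t + M * t :=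
    Nat.eq_of_mul_eq_mul_left (by omega) (h.trans (by ring))
  have hproper : ∑ d ∈ (M * t).properDivisors, d = t := by
    rw [Nat.sum_divisors_eq_sum_properDivisors_add_self] at hσ
    omega
  have ht : 0 < t := Nat.pos_of_mul_pos_left hm
  obtain rfl : t = 1 := by
    have hdvd : ∑ d ∈ (M * t).properDivisors, d ∣ M * t := by
      rw [hproper]
      exact dvd_mul_left t M
    have hcases := Nat.sum_properDivisors_dvd hdvd
    rw [hproper] at hcases
    exact hcases.resolve_right (by nlinarith)
  exact ⟨Nat.sum_properDivisors_eq_one_iff_prime.1 hproper, mul_one M⟩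

theorem sum_divisors_two_pow (k : ℕ) : ∑ d ∈ (2 ^ k).divisors, d = mersenne (k + 1) := by
  rw [Nat.sum_divisors_prime_pow Nat.prime_two, Nat.geomSum_eq le_rfl, mersenne]
  simp

/-- The **Euclid–Euler theorem**, Euler's direction. -/
theorem eq_two_pow_mul_mersenne_of_even_perfect {n : ℕ} (hn : n.Perfect) (heven : Even n) :
    ∃ k, (mersenne (k + 1)).Prime ∧ n = 2 ^ k * mersenne (k + 1) := by
  obtain ⟨k, m, hm, rfl⟩ := Nat.exists_eq_two_pow_mul_odd hn.2.ne'
  have hk : k ≠ 0 := by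
    rintro rfl
    simp [Nat.not_even_iff_odd.2 hm] at heven
  have hcop : (2 ^ k).Coprime m := (Nat.coprime_two_left.2 hm).pow_left k
  have hσ : mersenne (k + 1) * ∑ d ∈ m.divisors, d = (mersenne (k + 1) + 1) * m := by
    rw [← sum_divisors_two_pow, ← hcop.sum_divisors_mul, sum_divisors_two_pow, succ_mersenne,
      (Nat.perfect_iff_sum_divisors_eq_two_mul hn.2).1 hn]
    ring
  obtain ⟨hprime, rfl⟩ :=
    prime_and_eq_of_mul_sum_divisors_eq (one_lt_mersenne.2 (by omega)) hm.pos hσ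
  exact ⟨k, hprime, rfl⟩

theorem eq_six_or_eq_mul_of_even_perfect {n : ℕ} (hn : n.Perfect) (heven : Even n) :
    n = 6 ∨ ∃ c, c % 12 = 4 ∧ n = c * (2 * c - 1) := by
  obtain ⟨k, hprime, rfl⟩ := eq_two_pow_mul_mersenne_of_even_perfect hn heven
  have hk := hprime.of_mersenne
  rcases hk.eq_two_or_odd' with hk2 | hkodd
  · obtain rfl : k = 1 := by omega
    exact .inl (by norm_num [mersenne])
  · have hk3 : 3 ≤ k + 1 := by
      obtain ⟨j, hj⟩ := hkodd
      have := hk.two_le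
      omega
    have hsucc := succ_mersenne (k + 1)
    have h8 := mersenne_mod_eight hk3
    have h3 := mersenne_mod_three hkodd hk3
    refine .inr ⟨2 ^ k, by omega, ?_⟩
    rw [mersenne, pow_succ']

theorem not_perfect_even_perfect_add {y δ : ℕ} (hy : y.Perfect) (heven : Even y)
    (hδ : δ % 12 = 3) (hδ' : δ % 36 ≠ 3) : ¬ (y + δ).Perfect := by
  intro hperf
  rcases eq_six_or_eq_mul_of_even_perfect hy heven with rfl | ⟨c, hc, rfl⟩
  · have : 3 ^ 2 ∣ 6 + δ := sq_dvd_of_odd_perfect hperf (Nat.odd_iff.2 (by omega))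
      Nat.prime_three (by norm_num) (by omega)
    omega
  · have : 4 ∣ c * (2 * c - 1) := Dvd.dvd.mul_right (by omega) _
    exact mod_four_ne_three_of_perfect hperf (by omega)

theorem mul_two_mul_sub_one_mod_thirtySix {a : ℕ} (ha : a % 12 = 11) (ha' : a % 9 ≠ 8) :
    a * (2 * a - 1) % 36 = 15 ∨ a * (2 * a - 1) % 36 = 27 := by
  have ha36 : a % 36 = 11 ∨ a % 36 = 23 := by omega
  rcases ha36 with h | h
  · simp [Nat.mul_mod, h, show (2 * a - 1) % 36 = 21 by omega]
  · simp [Nat.mul_mod, h, show (2 * a - 1) % 36 = 9 by omega]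

theorem add_mul_two_mul_add_sub_one {a : ℕ} (A : ℕ) (ha : 0 < a) :
    (a + A) * (2 * (a + A) - 1) = A * (2 * A + (4 * a - 1)) + a * (2 * a - 1) := by
  zify [show 1 ≤ 2 * (a + A) by omega, show 1 ≤ 4 * a by omega, show 1 ≤ 2 * a by omega]
  ring

theorem not_perfect_of_add_eq_even_perfect {a x y : ℕ} (ha : a % 12 = 11)
    (hp : (4 * a - 1).Prime) (hx : x.Perfect) (heven : Even x) (h : y + a * (2 * a - 1) = x) :
    ¬ y.Perfect := by
  have hle : a ≤ a * (2 * a - 1) := Nat.le_mul_of_pos_right a (by omega)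
  rcases eq_six_or_eq_mul_of_even_perfect hx heven with rfl | ⟨c, hc, rfl⟩
  · omega
  · have hac : a ≤ c := by
      by_contra! hca
      have : c * (2 * c - 1) < a * (2 * a - 1) :=
        Nat.mul_lt_mul_of_lt_of_le hca (by omega) (by omega)
      omega
    obtain ⟨A, rfl⟩ := Nat.exists_eq_add_of_le hac
    obtain rfl : y = A * (2 * A + (4 * a - 1)) := by
      rw [add_mul_two_mul_add_sub_one A (by omega)] at h
      exact Nat.add_right_cancel h
    exact not_perfect_mul_two_mul_add_prime hp (by omega) (by omega)

theorem stmt_11_general (a : ℕ) (ha : a % 12 = 11) (ha' : a % 9 ≠ 8) (hp : (4 * a - 1).Prime) :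
    ¬ ∃ x y : ℕ, Nat.Perfect x ∧ Nat.Perfect y ∧ x - y = a * (2 * a - 1) := by
  rintro ⟨x, y, hx, hy, hxy⟩
  have hδ := mul_two_mul_sub_one_mod_thirtySix ha ha'
  have hsum : y + a * (2 * a - 1) = x := by omega
  rcases Nat.even_or_odd y with hyeven | hyodd
  · exact not_perfect_even_perfect_add hy hyeven (by omega) (by omega) (hsum ▸ hx)
  · have hxeven : Even x := hsum ▸ hyodd.add_odd (Nat.odd_iff.2 (by omega))
    exact not_perfect_of_add_eq_even_perfect ha hp hx hxeven hsum hy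

theorem stmt_11 (s : ℕ) (hs : s % 3 ≠ 2) (hl : Nat.Prime (96 * s + 91)) :
    ¬ ∃ x y : ℕ, Nat.Perfect x ∧ Nat.Perfect y ∧
      x - y = (24 * s + 23) * (48 * s + 45) := by
  rw [show 48 * s + 45 = 2 * (24 * s + 23) - 1 by omega]
  exact stmt_11_general _ (by omega) (by omega) (by convert hl using 1; omega)
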